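/- The determinant of A_1 equals k_1 · b_n · ∏_{i=1}^{n−1} (k_{i+1} b_i − k_i a_i). -/

import Mathlib

/-!
On and above the diagonal `A₁` agrees with the rank-one matrix `(kᵢ bⱼ)`. Factoring `k₁` out of the
first row and subtracting `kᵢ` times the resulting row `b` from each other row `i` therefore makes
those rows strictly lower triangular. The last column is then `(bₙ, 0, …, 0)`, and expanding along
it leaves a lower triangular minor, whose diagonal is the original subdiagonal: entries of `A₁`
further below the diagonal do not matter.
-/

open Matrix

theorem det_eq_mul_det_updateRow_sub_vecMulVec {R ι : Type*} [CommRing R] [Fintype ι]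
    [DecidableEq ι] (A : Matrix ι ι R) (u v : ι → R) (i₀ : ι) (hA : A i₀ = u i₀ • v) :
    A.det = u i₀ * ((A - vecMulVec u v).updateRow i₀ v).det := by
  have factor_row : A.det = u i₀ * (A.updateRow i₀ v).det := by
    rw [← det_updateRow_smul, ← hA, updateRow_eq_self]
  rw [factor_row]
  congr 1
  refine det_eq_of_forall_row_eq_smul_add_const (Function.update u i₀ 0) i₀ (by simp) fun i j ↦ ?_
  obtain rfl | hi := eq_or_ne i i₀
  · simp
  · simp [hi, vecMulVec_apply]

theorem det_of_forall_succ_le_eq_zero {R : Type*} [CommRing R] {n : ℕ}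
    (B : Matrix (Fin (n + 1)) (Fin (n + 1)) R)
    (hB : ∀ (i : Fin n) (j : Fin (n + 1)), i.succ ≤ j → B i.succ j = 0) :
    B.det = B 0 (Fin.last n) * ∏ i : Fin n, -B i.succ i.castSucc := by
  have minor_lower : (B.submatrix Fin.succ Fin.castSucc).IsLowerTriangular := fun i j hij ↦
    hB i j.castSucc (Fin.succ_le_castSucc_iff.2 hij)
  have minor_det : (B.submatrix Fin.succ Fin.castSucc).det = ∏ i : Fin n, B i.succ i.castSucc :=
    det_of_isLowerTriangular _ minor_lower
  have last_col (i : Fin n) : B i.succ (Fin.last n) = 0 := hB i _ (Fin.le_last _)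
  rw [det_succ_column B (Fin.last n), Fin.sum_univ_succ]
  simp only [last_col, mul_zero, zero_mul, Finset.sum_const_zero, add_zero, Fin.succAbove_last,
    Fin.succAbove_zero, minor_det, Finset.prod_neg, Finset.card_univ, Fintype.card_fin,
    Fin.val_zero, Fin.val_last, zero_add]
  ring

theorem det_of_forall_le_eq_mul {R : Type*} [CommRing R] {n : ℕ}
    (A : Matrix (Fin (n + 1)) (Fin (n + 1)) R) (u v : Fin (n + 1) → R)
    (hA : ∀ i j, i ≤ j → A i j = u i * v j) :
    A.det = u 0 * v (Fin.last n) *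
      ∏ i : Fin n, (u i.succ * v i.castSucc - A i.succ i.castSucc) := by
  have first_row : A 0 = u 0 • v := funext fun j ↦ hA 0 j (Fin.zero_le j)
  rw [det_eq_mul_det_updateRow_sub_vecMulVec A u v 0 first_row, det_of_forall_succ_le_eq_zero]
  · simp [vecMulVec_apply, mul_assoc]
  · intro i j hij
    simp [vecMulVec_apply, hA _ _ hij]

theorem stmt_2_general {R : Type*} [CommRing R] {n : ℕ} (hn : 0 < n) (b c k : ℕ → R)
    (A : Matrix (Fin n) (Fin n) R)
    (hupper : ∀ i j : Fin n, i ≤ j → A i j = k (i + 1) * b (j + 1))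
    (hsubdiag : ∀ i j : Fin n, (i : ℕ) = j + 1 → A i j = c (j + 1)) :
    A.det = k 1 * b n * ∏ i ∈ Finset.Icc 1 (n - 1), (k (i + 1) * b i - c i) := by
  obtain ⟨m, rfl⟩ := Nat.exists_eq_add_one.2 hn
  have subdiag (i : Fin m) : A i.succ i.castSucc = c (i + 1) := hsubdiag _ _ (by simp)
  have reindex : ∏ i ∈ Finset.Icc 1 m, (k (i + 1) * b i - c i) =
      ∏ i : Fin m, (k (i + 1 + 1) * b (i + 1) - c (i + 1)) := by
    rw [← Finset.Ico_add_one_right_eq_Icc, Finset.prod_Ico_eq_prod_range,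
      ← Fin.prod_univ_eq_prod_range]
    simp [add_comm]
  rw [det_of_forall_le_eq_mul A (fun i ↦ k (i + 1)) (fun j ↦ b (j + 1)) hupper]
  simp [subdiag, reindex]

/-- `det A₁ = k₁ bₙ ∏_{i=1}^{n-1} (k_{i+1} bᵢ - kᵢ aᵢ)`. -/
theorem stmt_2 {F : Type*} [Field F] {n : ℕ} (hn : 2 ≤ n)
    (a b k : ℕ → F)
    (A₁ : Matrix (Fin n) (Fin n) F)
    (hA : ∀ i j : Fin n, A₁ i j =
      if (i : ℕ) ≤ (j : ℕ) then k ((i : ℕ) + 1) * b ((j : ℕ) + 1)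
      else k ((j : ℕ) + 1) * a ((j : ℕ) + 1)) :
    A₁.det = k 1 * b n * ∏ i ∈ Finset.Icc 1 (n - 1), (k (i + 1) * b i - k i * a i) :=
  stmt_2_general (by omega) b (fun j ↦ k j * a j) k A₁
    (fun i j hij ↦ (hA i j).trans (if_pos hij))
    (fun i j hij ↦ (hA i j).trans (if_neg (by omega)))
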